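/- arXiv:2109.02709 — 3 statements merged into one kernel-verified Lean document; each statement's English description precedes it below -/
import Mathlib

section
/- Let p ≥ 1 and let Ψ be a nonnegative strictly increasing function on [0,∞) with Ψ(0) = 0 and Ψ(∞) = ∞ such that Ψ^p ∈ Lle(0,∞) with quadruple (0, β_p, γ_p, ν_p) satisfying β_p − ∫_{(0,∞)} x³/(1+x²) ν_p(dx) ∈ [0,∞). Then the function f(t) := (t²/Γ(p+1)) ∫₀^∞ e^{−t x} Ψ(x)^p dx, t > 0, is a Stieltjes transform, with Γ(p+1)·f(t) = (Ψ^p)'(0+) + γ_p²/t + ∫_{(0,∞)} x²/(t+x) ν_p(dx); equivalently, t ↦ (t³/Γ(p+1)) ∫₀^∞ e^{−t x} Ψ(x)^p dx is a complete Bernstein function. -/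
open MeasureTheory Set Filter

/-- A Stieltjes transform on `(0,∞)`:
`f(λ) = d + q/λ + ∫_{(0,∞)} (λ+u)⁻¹ Δ(du)` with `d, q ≥ 0` and `Δ` a Borel measure on
`(0,∞)` integrating `(1+u)⁻¹`. -/
def IsStieltjesFn (f : ℝ → ℝ) : Prop :=
  ∃ d q : ℝ, 0 ≤ d ∧ 0 ≤ q ∧ ∃ Δ : Measure ℝ, Δ {x | x ≤ 0} = 0 ∧
    (∫⁻ u, ENNReal.ofReal ((1 + u)⁻¹) ∂Δ) < ⊤ ∧
    ∀ l : ℝ, 0 < l → f l = d + q / l + ∫ u, (l + u)⁻¹ ∂Δ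

/-- A complete Bernstein function on `(0,∞)`:
`f(λ) = q + dλ + ∫_{(0,∞)} λ/(λ+x) σ(dx)` with `q, d ≥ 0` and `σ` a Borel measure on
`(0,∞)` integrating `(1+x)⁻¹`. -/
def IsCompleteBernsteinFn (f : ℝ → ℝ) : Prop :=
  ∃ q d : ℝ, 0 ≤ q ∧ 0 ≤ d ∧ ∃ σ : Measure ℝ, σ {x | x ≤ 0} = 0 ∧
    (∫⁻ x, ENNReal.ofReal ((1 + x)⁻¹) ∂σ) < ⊤ ∧
    ∀ l : ℝ, 0 < l → f l = q + d * l + ∫ x, l / (l + x) ∂σ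

theorem integral_pow_mul_exp_neg_mul_Ioi (n : ℕ) {a : ℝ} (ha : 0 < a) :
    ∫ l in Ioi (0 : ℝ), l ^ n * Real.exp (-a * l) = n.factorial / a ^ (n + 1) := by
  have h := Real.integral_rpow_mul_exp_neg_mul_Ioi (a := n + 1) (by positivity) ha
  rw [Real.Gamma_nat_eq_factorial] at h
  have e : (1 / a) ^ ((n : ℝ) + 1) = 1 / a ^ (n + 1) := by
    rw [← Nat.cast_succ, Real.rpow_natCast, one_div_pow]
  rw [e, add_sub_cancel_right] at h
  simp only [Real.rpow_natCast, ← neg_mul] at h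
  rw [h]
  ring

theorem integrableOn_pow_mul_exp_neg_mul_Ioi (n : ℕ) {a : ℝ} (ha : 0 < a) :
    IntegrableOn (fun l : ℝ => l ^ n * Real.exp (-a * l)) (Ioi 0) := by
  refine Integrable.of_integral_ne_zero ?_
  rw [integral_pow_mul_exp_neg_mul_Ioi n ha]
  positivity

/-- The Laplace transform of the compensated kernel `l ↦ e^{-lx} - 1 + lx`. -/
theorem integrableOn_and_integral_exp_mul_kernel {t x : ℝ} (ht : 0 < t) (hx : 0 < x) :
    IntegrableOn (fun l : ℝ => Real.exp (-t * l) * (Real.exp (-l * x) - 1 + l * x)) (Ioi 0) ∧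
    ∫ l in Ioi (0 : ℝ), Real.exp (-t * l) * (Real.exp (-l * x) - 1 + l * x) =
      (t ^ 2)⁻¹ * (x ^ 2 / (t + x)) := by
  have htx : 0 < t + x := by positivity
  have i₁ := integrableOn_pow_mul_exp_neg_mul_Ioi 0 htx
  have i₂ := integrableOn_pow_mul_exp_neg_mul_Ioi 0 ht
  have i₃ := (integrableOn_pow_mul_exp_neg_mul_Ioi 1 ht).const_mul x
  have e : (fun l : ℝ => Real.exp (-t * l) * (Real.exp (-l * x) - 1 + l * x)) =
      fun l : ℝ => (l ^ 0 * Real.exp (-(t + x) * l) - l ^ 0 * Real.exp (-t * l)) +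
        x * (l ^ 1 * Real.exp (-t * l)) := by
    funext l
    rw [show -(t + x) * l = -t * l + -l * x by ring, Real.exp_add]
    ring
  rw [e]
  refine ⟨(i₁.sub i₂).add i₃, ?_⟩
  have i₁₂ : Integrable (fun l : ℝ => l ^ 0 * Real.exp (-(t + x) * l) - l ^ 0 * Real.exp (-t * l))
      (volume.restrict (Ioi 0)) := i₁.sub i₂
  rw [integral_add i₁₂ i₃, integral_sub i₁ i₂, integral_const_mul,
    integral_pow_mul_exp_neg_mul_Ioi 0 htx, integral_pow_mul_exp_neg_mul_Ioi 0 ht,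
    integral_pow_mul_exp_neg_mul_Ioi 1 ht]
  simp only [Nat.factorial, Nat.cast_one, mul_one]
  field_simp
  ring

theorem sFinite_of_lintegral_lt_top {α : Type*} [MeasurableSpace α] {μ : Measure α}
    {f : α → ENNReal} (hf : Measurable f) (hpos : ∀ᵐ x ∂μ, f x ≠ 0) (htop : ∀ᵐ x ∂μ, f x ≠ ⊤)
    (hint : ∫⁻ x, f x ∂μ < ⊤) : SFinite μ := by
  have : IsFiniteMeasure (μ.withDensity f) := isFiniteMeasure_withDensity hint.ne
  rw [← withDensity_inv_same hf hpos htop]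
  infer_instance

section LevyMeasure

variable {ν : Measure ℝ}

theorem ae_pos_of_measure_nonpos_eq_zero (hν : ν {x | x ≤ 0} = 0) : ∀ᵐ x ∂ν, 0 < x := by
  simpa [ae_iff, not_lt] using hν

theorem sFinite_of_lintegral_min_sq_one_lt_top (hν : ν {x | x ≤ 0} = 0)
    (hint : (∫⁻ x, ENNReal.ofReal (min (x ^ 2) 1) ∂ν) < ⊤) : SFinite ν := by
  refine sFinite_of_lintegral_lt_top (by fun_prop) ?_ (by simp) hint
  filter_upwards [ae_pos_of_measure_nonpos_eq_zero hν] with x hx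
  simp [hx.ne']

theorem integrable_sq_div_add (hν : ν {x | x ≤ 0} = 0)
    (hν_int : (∫⁻ x, ENNReal.ofReal (min (x ^ 2) 1) ∂ν) < ⊤)
    (hβ_int : Integrable (fun x => x ^ 3 / (1 + x ^ 2)) ν) {t : ℝ} (ht : 0 < t) :
    Integrable (fun x => x ^ 2 / (t + x)) ν := by
  have hmin : Integrable (fun x : ℝ => min (x ^ 2) 1) ν := by
    refine ⟨by fun_prop, ?_⟩
    rwa [hasFiniteIntegral_iff_ofReal (ae_of_all _ fun x => by positivity)]
  refine ((hmin.const_mul t⁻¹).add (hβ_int.const_mul 2)).mono'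
    (Measurable.aestronglyMeasurable (by fun_prop)) ?_
  filter_upwards [ae_pos_of_measure_nonpos_eq_zero hν] with x hx
  rw [Real.norm_of_nonneg (by positivity)]
  simp only [Pi.add_apply]
  rcases le_total x 1 with h | h
  · rw [min_eq_left (by nlinarith)]
    have h₁ : x ^ 2 / (t + x) ≤ x ^ 2 / t := by gcongr; linarith
    have h₂ : 0 ≤ x ^ 3 / (1 + x ^ 2) := by positivity
    rw [div_eq_inv_mul _ t] at h₁
    linarith
  · have h₁ : x ^ 2 / (t + x) ≤ x := by
      rw [div_le_iff₀ (by positivity)]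
      nlinarith
    have h₂ : x ≤ 2 * (x ^ 3 / (1 + x ^ 2)) := by
      rw [mul_div_assoc', le_div_iff₀ (by positivity)]
      nlinarith [mul_pos hx hx, mul_nonneg hx.le (mul_self_nonneg x)]
    have h₃ : 0 ≤ t⁻¹ * min (x ^ 2) 1 := by positivity
    linarith

/-- The Laplace transform of a Laplace exponent, in terms of its Lévy triplet. -/
theorem integral_exp_mul_laplaceExponent (hν : ν {x | x ≤ 0} = 0)
    (hν_int : (∫⁻ x, ENNReal.ofReal (min (x ^ 2) 1) ∂ν) < ⊤)
    (hβ_int : Integrable (fun x => x ^ 3 / (1 + x ^ 2)) ν) (β c : ℝ) {t : ℝ} (ht : 0 < t) :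
    t ^ 2 * ∫ l in Ioi (0 : ℝ), Real.exp (-t * l) * (β * l + c / 2 * l ^ 2 +
        ∫ x, (Real.exp (-l * x) - 1 + l * x / (1 + x ^ 2)) ∂ν) =
      (β - ∫ x, x ^ 3 / (1 + x ^ 2) ∂ν) + c / t + ∫ x, x ^ 2 / (t + x) ∂ν := by
  have hpos := ae_pos_of_measure_nonpos_eq_zero hν
  have := sFinite_of_lintegral_min_sq_one_lt_top hν hν_int
  set B := ∫ x, x ^ 3 / (1 + x ^ 2) ∂ν with hB
  let k : ℝ → ℝ → ℝ := fun l x => Real.exp (-t * l) * (Real.exp (-l * x) - 1 + l * x)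
  have k_nonneg (l x : ℝ) : 0 ≤ k l x := by
    have := Real.add_one_le_exp (-l * x)
    exact mul_nonneg (Real.exp_pos _).le (by linarith)
  have hk : Integrable (Function.uncurry k) ((volume.restrict (Ioi 0)).prod ν) := by
    rw [integrable_prod_iff' (Measurable.aestronglyMeasurable (by unfold k; fun_prop))]
    constructor
    · filter_upwards [hpos] with x hx
      exact (integrableOn_and_integral_exp_mul_kernel ht hx).1
    · refine ((integrable_sq_div_add hν hν_int hβ_int ht).const_mul (t ^ 2)⁻¹).congr ?_
      filter_upwards [hpos] with x hx
      simp only [Function.uncurry_apply_pair, Real.norm_of_nonneg (k_nonneg _ _)]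
      exact (integrableOn_and_integral_exp_mul_kernel ht hx).2.symm
  have i₁ := (integrableOn_pow_mul_exp_neg_mul_Ioi 1 ht).const_mul (β - B)
  have i₂ := (integrableOn_pow_mul_exp_neg_mul_Ioi 2 ht).const_mul (c / 2)
  have hsplit : ∀ᵐ l ∂(volume.restrict (Ioi (0 : ℝ))),
      Real.exp (-t * l) * (β * l + c / 2 * l ^ 2 +
        ∫ x, (Real.exp (-l * x) - 1 + l * x / (1 + x ^ 2)) ∂ν) =
      ((β - B) * (l ^ 1 * Real.exp (-t * l)) + c / 2 * (l ^ 2 * Real.exp (-t * l))) +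
        ∫ x, k l x ∂ν := by
    filter_upwards [hk.prod_right_ae] with l hl
    have hl' : Integrable (fun x => Real.exp (-l * x) - 1 + l * x) ν :=
      (integrable_const_mul_iff (Real.exp_pos (-t * l)).ne'.isUnit _).1 hl
    have e : ∫ x, (Real.exp (-l * x) - 1 + l * x / (1 + x ^ 2)) ∂ν =
        (∫ x, (Real.exp (-l * x) - 1 + l * x) ∂ν) - l * B := by
      rw [hB, ← integral_const_mul, ← integral_sub hl' (hβ_int.const_mul l)]
      refine integral_congr_ae (ae_of_all _ fun x => ?_)
      have : 1 + x ^ 2 ≠ 0 := by positivity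
      simp only
      field_simp
      ring
    rw [e]
    simp only [k, integral_const_mul]
    ring
  have i₃ : Integrable (fun l => ∫ x, k l x ∂ν) (volume.restrict (Ioi 0)) := hk.integral_prod_left
  rw [integral_congr_ae hsplit, integral_add (i₁.fun_add i₂) i₃,
    integral_add i₁ i₂, integral_const_mul, integral_const_mul,
    integral_pow_mul_exp_neg_mul_Ioi 1 ht, integral_pow_mul_exp_neg_mul_Ioi 2 ht,
    integral_integral_swap hk]
  have hswap : ∫ x, (∫ l in Ioi (0 : ℝ), k l x) ∂ν = (t ^ 2)⁻¹ * ∫ x, x ^ 2 / (t + x) ∂ν := by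
    rw [← integral_const_mul]
    refine integral_congr_ae ?_
    filter_upwards [hpos] with x hx
    exact (integrableOn_and_integral_exp_mul_kernel ht hx).2
  rw [hswap]
  simp only [Nat.factorial]
  push_cast
  field_simp

end LevyMeasure

theorem isStieltjesFn_of_sq_div_add {f : ℝ → ℝ} {b c G : ℝ} (hb : 0 ≤ b) (hc : 0 ≤ c)
    (hG : 0 < G) {ν : Measure ℝ} (hν : ν {x | x ≤ 0} = 0)
    (hint : Integrable (fun x => x ^ 2 / (1 + x)) ν)
    (hf : ∀ t, 0 < t → G * f t = b + c / t + ∫ x, x ^ 2 / (t + x) ∂ν) : IsStieltjesFn f := by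
  have hpos := ae_pos_of_measure_nonpos_eq_zero hν
  have hmeas : Measurable fun x : ℝ => ENNReal.ofReal (x ^ 2 / G) := by fun_prop
  refine ⟨b / G, c / G, by positivity, by positivity,
    ν.withDensity fun x => ENNReal.ofReal (x ^ 2 / G), withDensity_absolutelyContinuous _ _ hν,
    ?_, fun t ht => ?_⟩
  · rw [lintegral_withDensity_eq_lintegral_mul _ hmeas (by fun_prop)]
    refine lt_of_eq_of_lt (lintegral_congr_ae ?_) (hint.const_mul G⁻¹).lintegral_lt_top
    filter_upwards [hpos] with x hx
    rw [Pi.mul_apply, ← ENNReal.ofReal_mul (by positivity)]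
    congr 1
    ring
  · rw [integral_withDensity_eq_integral_toReal_smul hmeas (by simp)]
    have e : ∫ x, (ENNReal.ofReal (x ^ 2 / G)).toReal • (t + x)⁻¹ ∂ν =
        G⁻¹ * ∫ x, x ^ 2 / (t + x) ∂ν := by
      rw [← integral_const_mul]
      refine integral_congr_ae (ae_of_all _ fun x => ?_)
      simp only
      rw [ENNReal.toReal_ofReal (by positivity), smul_eq_mul]
      ring
    rw [e, ← mul_right_inj' hG.ne', hf t ht]
    field_simp

theorem IsStieltjesFn.isCompleteBernsteinFn {f g : ℝ → ℝ} (hf : IsStieltjesFn f)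
    (hg : ∀ t, 0 < t → g t = t * f t) : IsCompleteBernsteinFn g := by
  obtain ⟨d, q, hd, hq, Δ, hΔ, hint, h⟩ := hf
  refine ⟨q, d, hq, hd, Δ, hΔ, hint, fun t ht => ?_⟩
  simp only [div_eq_mul_inv t]
  rw [integral_const_mul, hg t ht, h t ht]
  field_simp
  ring

/-- Let `p ≥ 1` and let `Ψ` be nonnegative strictly increasing on `[0,∞)`
with `Ψ(0) = 0`, `Ψ(∞) = ∞`, such that `Ψ^p ∈ Lle(0,∞)` with quadruple `(0, β_p, γ_p, ν_p)`
satisfying `β_p − ∫ x³/(1+x²) ν_p(dx) ∈ [0,∞)`. Then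
`f(t) = (t²/Γ(p+1)) ∫₀^∞ e^{−tx} Ψ(x)^p dx` is a Stieltjes transform, with
`Γ(p+1)·f(t) = (Ψ^p)'(0+) + γ_p²/t + ∫ x²/(t+x) ν_p(dx)`; equivalently,
`t ↦ (t³/Γ(p+1)) ∫₀^∞ e^{−tx} Ψ(x)^p dx` is a complete Bernstein function. -/
theorem stmt_10 (p : ℝ) (hp : 1 ≤ p) (Ψ : ℝ → ℝ)
    (hΨpos : ∀ x : ℝ, 0 ≤ x → 0 ≤ Ψ x) (hmono : StrictMonoOn Ψ (Ici 0))
    (h0 : Ψ 0 = 0) (hinf : Tendsto Ψ atTop atTop)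
    (β γ : ℝ) (hγ : 0 ≤ γ) (ν : Measure ℝ) (hν_supp : ν {x | x ≤ 0} = 0)
    (hν_int : (∫⁻ x, ENNReal.ofReal (min (x ^ 2) 1) ∂ν) < ⊤)
    (hLle : ∀ l : ℝ, 0 ≤ l →
      Ψ l ^ p = β * l + γ ^ 2 / 2 * l ^ 2 +
        ∫ x, (Real.exp (-l * x) - 1 + l * x / (1 + x ^ 2)) ∂ν)
    (hβ_int : Integrable (fun x => x ^ 3 / (1 + x ^ 2)) ν)
    (hβ_pos : 0 ≤ β - ∫ x, x ^ 3 / (1 + x ^ 2) ∂ν) :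
    IsStieltjesFn
      (fun t => t ^ 2 / Real.Gamma (p + 1) * ∫ x in Ioi (0 : ℝ), Real.exp (-t * x) * Ψ x ^ p) ∧
    (∀ t : ℝ, 0 < t →
      Real.Gamma (p + 1) *
          (t ^ 2 / Real.Gamma (p + 1) * ∫ x in Ioi (0 : ℝ), Real.exp (-t * x) * Ψ x ^ p) =
        (β - ∫ x, x ^ 3 / (1 + x ^ 2) ∂ν) + γ ^ 2 / t + ∫ x, x ^ 2 / (t + x) ∂ν) ∧
    IsCompleteBernsteinFn
      (fun t => t ^ 3 / Real.Gamma (p + 1) * ∫ x in Ioi (0 : ℝ), Real.exp (-t * x) * Ψ x ^ p) := by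
  have hG : 0 < Real.Gamma (p + 1) := Real.Gamma_pos_of_pos (by linarith)
  have hmain : ∀ t : ℝ, 0 < t → Real.Gamma (p + 1) *
      (t ^ 2 / Real.Gamma (p + 1) * ∫ x in Ioi (0 : ℝ), Real.exp (-t * x) * Ψ x ^ p) =
      (β - ∫ x, x ^ 3 / (1 + x ^ 2) ∂ν) + γ ^ 2 / t + ∫ x, x ^ 2 / (t + x) ∂ν := by
    intro t ht
    rw [← integral_exp_mul_laplaceExponent hν_supp hν_int hβ_int β (γ ^ 2) ht, ← mul_assoc,
      mul_div_cancel₀ _ hG.ne']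
    congr 1
    refine setIntegral_congr_fun measurableSet_Ioi fun l hl => ?_
    simp only [hLle l (le_of_lt hl)]
  have hS := isStieltjesFn_of_sq_div_add hβ_pos (sq_nonneg γ) hG hν_supp
    (integrable_sq_div_add hν_supp hν_int hβ_int one_pos) hmain
  exact ⟨hS, hmain, hS.isCompleteBernsteinFn fun t _ => by ring⟩
end

section
/- For every s ∈ ℝ, ∫₀^∞ cos(s x) · x / ((1+x²) · sinh(πx/2)) dx = 2·sinh(s)·arctan(e^{−s}) + (π/2)·e^{−s} − 1. In particular, taking s = 0, ∫₀^∞ x / ((1+x²) · sinh(πx/2)) dx = π/2 − 1. -/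
open MeasureTheory Set

/-- Mittag-Leffler expansion of the cotangent on the imaginary axis. -/
lemma hasSum_cot_mul_I {c : ℝ} (hc : c ≠ 0) :
    HasSum (fun n : ℕ => 1 / (c * Complex.I - (n + 1)) + 1 / (c * Complex.I + (n + 1)))
      (Real.pi * Complex.cot (Real.pi * (c * Complex.I)) - 1 / (c * Complex.I)) := by
  have hmem : (c * Complex.I : ℂ) ∈ Complex.integerComplement := by
    rintro ⟨n, hn⟩
    have := congrArg Complex.im hn
    simp at this
    exact hc this.symm
  rw [cot_series_rep' hmem]
  exact (summable_cotTerm hmem).hasSum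

/-- The terms of odd denominator in the Mittag-Leffler expansion of the cotangent. -/
lemma hasSum_cot_mul_I_odd {c : ℝ} (hc : c ≠ 0) :
    HasSum (fun k : ℕ => 1 / (2 * c * Complex.I - (2 * k + 1)) +
        1 / (2 * c * Complex.I + (2 * k + 1)))
      (Real.pi * Complex.cot (2 * (Real.pi * (c * Complex.I))) -
        Real.pi / 2 * Complex.cot (Real.pi * (c * Complex.I))) := by
  have h₁ := hasSum_cot_mul_I (c := 2 * c) (by positivity)
  push_cast at h₁
  let f : ℕ → ℂ := fun n =>
    1 / (2 * c * Complex.I - (n + 1)) + 1 / (2 * c * Complex.I + (n + 1))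
  have heven := (h₁.summable.comp_injective (i := fun k : ℕ => 2 * k)
    (fun _ _ h => by simpa using h)).hasSum
  have hodd : HasSum (fun k : ℕ => f (2 * k + 1))
      (1 / 2 * (Real.pi * Complex.cot (Real.pi * (c * Complex.I)) - 1 / (c * Complex.I))) := by
    refine ((hasSum_cot_mul_I hc).mul_left (1 / 2)).congr_fun fun k => ?_
    simp only [f]
    push_cast
    rw [show 2 * (c : ℂ) * Complex.I - (2 * k + 1 + 1) = 2 * (c * Complex.I - (k + 1)) by ring,
      show 2 * (c : ℂ) * Complex.I + (2 * k + 1 + 1) = 2 * (c * Complex.I + (k + 1)) by ring]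
    simp only [one_div, mul_inv]
    ring
  have hval := eq_sub_of_add_eq ((HasSum.even_add_odd (f := f) heven hodd).unique h₁)
  rw [hval] at heven
  convert! heven using 1
  · funext k
    simp
  · rw [show (Real.pi : ℂ) * (2 * c * Complex.I) = 2 * (Real.pi * (c * Complex.I)) by ring,
      show 2 * (c : ℂ) * Complex.I = 2 * (c * Complex.I) by ring]
    simp only [one_div, mul_inv]
    ring

lemma cot_two_mul_sub_cot_mul_I {a : ℝ} (ha : a ≠ 0) :
    Complex.cot (2 * (a * Complex.I)) - 1 / 2 * Complex.cot (a * Complex.I) =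
      -(Complex.I / 2 * Real.tanh a) := by
  have hsinh : Complex.sinh a ≠ 0 := by
    rw [← Complex.ofReal_sinh]
    exact_mod_cast Real.sinh_eq_zero.not.2 ha
  have hcosh : Complex.cosh a ≠ 0 := by
    rw [← Complex.ofReal_cosh]
    exact_mod_cast (Real.cosh_pos a).ne'
  rw [Complex.cot, Complex.cot, Complex.sin_two_mul, Complex.cos_two_mul',
    Complex.sin_mul_I, Complex.cos_mul_I, Complex.ofReal_tanh, Complex.tanh_eq_sinh_div_cosh]
  have hI := Complex.I_ne_zero
  field_simp
  ring_nf

/-- Mittag-Leffler expansion of `tanh`. -/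
lemma hasSum_tanh (a : ℝ) :
    HasSum (fun n : ℕ => 2 * (a / (a ^ 2 + ((2 * n + 1) * (Real.pi / 2)) ^ 2))) (Real.tanh a) := by
  rcases eq_or_ne a 0 with rfl | ha
  · simp
  have hpi : (Real.pi : ℂ) ≠ 0 := by exact_mod_cast Real.pi_ne_zero
  have h := (hasSum_cot_mul_I_odd (div_ne_zero ha Real.pi_ne_zero)).mul_left
    (2 / Real.pi * Complex.I)
  rw [← Complex.hasSum_ofReal]
  convert! h using 1
  · funext n
    have hd : (a : ℂ) ^ 2 + ((2 * n + 1) * (Real.pi / 2)) ^ 2 ≠ 0 := by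
      have : a ^ 2 + ((2 * n + 1) * (Real.pi / 2)) ^ 2 ≠ 0 := by positivity
      exact_mod_cast this
    have hprod : (2 * ((a / Real.pi : ℝ) : ℂ) * Complex.I - (2 * n + 1)) *
        (2 * ((a / Real.pi : ℝ) : ℂ) * Complex.I + (2 * n + 1)) =
        -(4 / Real.pi ^ 2 * ((a : ℂ) ^ 2 + ((2 * n + 1) * (Real.pi / 2)) ^ 2)) := by
      push_cast
      field_simp
      ring_nf
      simp only [Complex.I_sq]
      ring
    have hne : (2 * ((a / Real.pi : ℝ) : ℂ) * Complex.I - (2 * n + 1)) *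
        (2 * ((a / Real.pi : ℝ) : ℂ) * Complex.I + (2 * n + 1)) ≠ 0 := by
      rw [hprod]
      exact neg_ne_zero.2 (mul_ne_zero (by simp [hpi]) hd)
    rw [div_add_div _ _ (left_ne_zero_of_mul hne) (right_ne_zero_of_mul hne), hprod]
    push_cast
    field_simp
    ring_nf
    simp only [Complex.I_sq]
    ring
  · have hθ : (Real.pi : ℂ) * (((a / Real.pi : ℝ) : ℂ) * Complex.I) = a * Complex.I := by
      push_cast; field_simp
    rw [hθ]
    have hcot := cot_two_mul_sub_cot_mul_I ha
    calc (Real.tanh a : ℂ) = 2 * Complex.I * -(Complex.I / 2 * Real.tanh a) := by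
          linear_combination (Real.tanh a : ℂ) * Complex.I_sq
      _ = _ := by
          rw [← hcot]
          field_simp

lemma integral_exp_neg_mul_sin {b : ℝ} (hb : 0 < b) (a : ℝ) :
    ∫ x in Ioi (0 : ℝ), Real.exp (-b * x) * Real.sin (a * x) = a / (a ^ 2 + b ^ 2) := by
  have hre : (-b + a * Complex.I : ℂ).re < 0 := by simpa using hb
  have h := integral_exp_mul_complex_Ioi hre 0
  have hi := integrableOn_exp_mul_complex_Ioi hre 0
  have him := Complex.imCLM.integral_comp_comm hi
  rw [h] at him
  have hfun (x : ℝ) : Complex.imCLM (Complex.exp ((-b + a * Complex.I) * x)) =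
      Real.exp (-b * x) * Real.sin (a * x) := by
    simp [Complex.exp_im]
  simp only [hfun] at him
  rw [him]
  simp [Complex.div_im, Complex.normSq_apply]
  ring

lemma integrableOn_mul_exp_neg_mul {b : ℝ} (hb : 0 < b) :
    IntegrableOn (fun x : ℝ => x * Real.exp (-b * x)) (Ioi 0) := by
  simpa using integrableOn_rpow_mul_exp_neg_mul_rpow (p := 1) (s := 1) (by norm_num)
    one_pos hb

lemma integral_mul_exp_neg_mul {b : ℝ} (hb : 0 < b) :
    ∫ x in Ioi (0 : ℝ), x * Real.exp (-b * x) = 1 / b ^ 2 := by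
  have := Real.integral_rpow_mul_exp_neg_mul_Ioi (a := 2) (r := b) (by norm_num) hb
  norm_num at this
  simpa using this

lemma hasSum_exp_neg_odd_mul {y : ℝ} (hy : 0 < y) :
    HasSum (fun n : ℕ => 2 * Real.exp (-(2 * n + 1) * y)) (1 / Real.sinh y) := by
  have h := (hasSum_geometric_of_lt_one (Real.exp_pos (-2 * y)).le
    (Real.exp_lt_one_iff.2 (by linarith))).mul_left (2 * Real.exp (-y))
  have hfun (n : ℕ) : 2 * Real.exp (-y) * Real.exp (-2 * y) ^ n =
      2 * Real.exp (-(2 * n + 1) * y) := by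
    rw [← Real.exp_nat_mul, mul_assoc, ← Real.exp_add]
    ring_nf
  simp only [hfun] at h
  convert! h using 1
  have h1 : Real.exp (-2 * y) = Real.exp (-y) ^ 2 := by rw [← Real.exp_nat_mul]; ring_nf
  have h2 : Real.exp (-y) < 1 := Real.exp_lt_one_iff.2 (by linarith)
  have h3 := Real.exp_pos (-y)
  rw [Real.sinh_eq, h1, show Real.exp y = (Real.exp (-y))⁻¹ by rw [Real.exp_neg, inv_inv]]
  have : 1 - Real.exp (-y) ^ 2 ≠ 0 := by nlinarith
  field_simp

/-- Sine transform of the hyperbolic cosecant. -/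
lemma integral_sin_div_sinh (a : ℝ) :
    ∫ x in Ioi (0 : ℝ), Real.sin (a * x) / Real.sinh (Real.pi * x / 2) = Real.tanh a := by
  set b : ℕ → ℝ := fun n => (2 * n + 1) * (Real.pi / 2) with hb
  have hbpos (n : ℕ) : 0 < b n := by positivity
  let F : ℕ → ℝ → ℝ := fun n x => 2 * (Real.exp (-b n * x) * Real.sin (a * x))
  have hle (n : ℕ) : ∀ᵐ x ∂volume.restrict (Ioi (0 : ℝ)),
      ‖F n x‖ ≤ 2 * |a| * (x * Real.exp (-b n * x)) := by
    filter_upwards [ae_restrict_mem measurableSet_Ioi] with x hx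
    have h := Real.abs_sin_le_abs (x := a * x)
    rw [abs_mul, abs_of_pos (mem_Ioi.1 hx)] at h
    simp only [F, norm_mul, Real.norm_eq_abs, Real.abs_exp, abs_two]
    nlinarith [mul_le_mul_of_nonneg_left h (Real.exp_pos (-b n * x)).le]
  have hdom (n : ℕ) := (integrableOn_mul_exp_neg_mul (hbpos n)).const_mul (2 * |a|)
  have hint (n : ℕ) : Integrable (F n) (volume.restrict (Ioi (0 : ℝ))) :=
    (hdom n).mono' (by fun_prop) (hle n)
  have hsq : Summable fun n : ℕ => 1 / b n ^ 2 := by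
    have h := ((summable_nat_add_iff 1).2 (Real.summable_one_div_nat_pow.2 one_lt_two))
    refine h.of_nonneg_of_le (fun n => by positivity) fun n => ?_
    have : (n : ℝ) + 1 ≤ b n := by
      simp only [hb]
      nlinarith [Real.pi_gt_three, (Nat.cast_nonneg n : (0 : ℝ) ≤ n)]
    push_cast
    gcongr
  have hsum : Summable fun n => ∫ x in Ioi (0 : ℝ), ‖F n x‖ := by
    refine (hsq.mul_left (2 * |a|)).of_nonneg_of_le
      (fun n => integral_nonneg fun x => norm_nonneg _) fun n => ?_
    rw [← integral_mul_exp_neg_mul (hbpos n), ← integral_const_mul]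
    exact integral_mono_ae (hint n).norm (hdom n) (hle n)
  have h := hasSum_integral_of_summable_integral_norm hint hsum
  simp only [F, integral_const_mul, integral_exp_neg_mul_sin (hbpos _)] at h
  rw [← h.unique (hasSum_tanh a)]
  refine setIntegral_congr_fun measurableSet_Ioi fun x hx => ?_
  have hs := (hasSum_exp_neg_odd_mul (y := Real.pi * x / 2)
    (by have := mem_Ioi.1 hx; positivity)).mul_right (Real.sin (a * x))
  have hx' := hs.tsum_eq
  rw [div_eq_mul_one_div, mul_comm, ← hx']
  refine tsum_congr fun n => ?_
  rw [mul_assoc]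
  simp only [hb]
  ring_nf

lemma integrableOn_div_sinh :
    IntegrableOn (fun x : ℝ => x / Real.sinh (Real.pi * x / 2)) (Ioi 0) := by
  have hdom : IntegrableOn (fun x : ℝ => 4 / Real.pi * Real.exp (-(Real.pi / 4) * x)) (Ioi 0) :=
    (integrableOn_exp_mul_Ioi (by simpa using Real.pi_pos) 0).const_mul _
  refine hdom.mono' (Measurable.aestronglyMeasurable (by fun_prop)) ?_
  filter_upwards [ae_restrict_mem measurableSet_Ioi] with x hx
  replace hx : 0 < x := hx
  have hpi := Real.pi_pos
  set y := Real.pi * x / 4 with hy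
  have hy0 : 0 < y := by positivity
  have hsinh : Real.sinh (Real.pi * x / 2) = 2 * Real.sinh y * Real.cosh y := by
    rw [← Real.sinh_two_mul]; congr 1; ring
  have h1 : y ≤ Real.sinh y := Real.self_le_sinh_iff.2 hy0.le
  have h2 : Real.exp y / 2 ≤ Real.cosh y := by
    rw [Real.cosh_eq]; linarith [Real.exp_pos (-y)]
  have h3 : y * Real.exp y ≤ Real.sinh (Real.pi * x / 2) := by
    rw [hsinh]
    nlinarith [mul_le_mul h1 h2 (by positivity) (by linarith)]
  have h4 : 0 < y * Real.exp y := by positivity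
  rw [Real.norm_of_nonneg (div_nonneg hx.le (h4.le.trans h3))]
  calc x / Real.sinh (Real.pi * x / 2) ≤ x / (y * Real.exp y) := by gcongr
    _ = _ := by
      rw [show -(Real.pi / 4) * x = -y by rw [hy]; ring, Real.exp_neg, hy]
      field_simp

lemma integrableOn_exp_neg_mul_tanh (s : ℝ) :
    IntegrableOn (fun t : ℝ => Real.exp (-t) * Real.tanh (t + s)) (Ioi 0) := by
  refine Integrable.mono' (g := fun t => Real.exp (-t)) (integrableOn_exp_neg_Ioi 0) ?_ ?_
  · have : Continuous Real.tanh := by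
      simp only [funext Real.tanh_eq_sinh_div_cosh]
      exact Real.continuous_sinh.div Real.continuous_cosh fun x => (Real.cosh_pos x).ne'
    fun_prop
  · refine .of_forall fun t => ?_
    rw [norm_mul, Real.norm_eq_abs, Real.abs_exp]
    exact mul_le_of_le_one_right (Real.exp_pos _).le (Real.abs_tanh_lt_one _).le

lemma integral_exp_neg_mul_tanh (s : ℝ) :
    ∫ t in Ioi (0 : ℝ), Real.exp (-t) * Real.tanh (t + s) =
      2 * Real.exp s * Real.arctan (Real.exp (-s)) - 1 := by
  let G : ℝ → ℝ := fun t =>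
    Real.exp s * (Real.exp (-(t + s)) - 2 * Real.arctan (Real.exp (-(t + s))))
  have hderiv (t : ℝ) : HasDerivAt G (Real.exp (-t) * Real.tanh (t + s)) t := by
    have h1 : HasDerivAt (fun t => Real.exp (-(t + s))) (-Real.exp (-(t + s))) t := by
      simpa using ((hasDerivAt_id t).add_const s).neg.exp
    refine ((h1.sub (h1.arctan.const_mul 2)).const_mul (Real.exp s)).congr_deriv ?_
    have h2 : Real.exp (-t) = Real.exp s * Real.exp (-(t + s)) := by
      rw [← Real.exp_add]; ring_nf
    rw [h2, Real.tanh_eq, show Real.exp (t + s) = (Real.exp (-(t + s)))⁻¹ by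
      rw [Real.exp_neg, inv_inv]]
    have := Real.exp_pos (-(t + s))
    field_simp
    ring
  have hlim : Filter.Tendsto G Filter.atTop (nhds 0) := by
    have h : Filter.Tendsto (fun t : ℝ => Real.exp (-(t + s))) Filter.atTop (nhds 0) :=
      Real.tendsto_exp_neg_atTop_nhds_zero.comp 
        (Filter.tendsto_atTop_add_const_right _ _ Filter.tendsto_id)
    have h' := (Real.continuous_arctan.tendsto 0).comp h
    simpa [G, Function.comp_def] using (h.sub (h'.const_mul 2)).const_mul (Real.exp s)
  rw [integral_Ioi_of_hasDerivAt_of_tendsto' (fun t _ => hderiv t)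
    (integrableOn_exp_neg_mul_tanh s) hlim]
  have : Real.exp s * Real.exp (-s) = 1 := by rw [← Real.exp_add]; simp
  simp only [G, zero_add]
  linear_combination -this

lemma integral_cos_mul_sin_div_sinh (s t : ℝ) :
    ∫ x in Ioi (0 : ℝ), Real.cos (s * x) * Real.sin (t * x) / Real.sinh (Real.pi * x / 2) =
      (Real.tanh (t + s) + Real.tanh (t - s)) / 2 := by
  have hint (a : ℝ) : IntegrableOn
      (fun x : ℝ => Real.sin (a * x) / Real.sinh (Real.pi * x / 2)) (Ioi 0) := by
    refine (integrableOn_div_sinh.const_mul |a|).mono' (Measurable.aestronglyMeasurable (by fun_prop)) ?_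
    filter_upwards [ae_restrict_mem measurableSet_Ioi] with x hx
    replace hx : 0 < x := hx
    have hsinh : 0 < Real.sinh (Real.pi * x / 2) := Real.sinh_pos_iff.2 (by positivity)
    have h := Real.abs_sin_le_abs (x := a * x)
    rw [abs_mul, abs_of_pos hx] at h
    rw [norm_div, Real.norm_eq_abs, Real.norm_of_nonneg hsinh.le, ← mul_div_assoc]
    gcongr
  rw [← integral_sin_div_sinh, ← integral_sin_div_sinh, ← integral_add (hint _) (hint _),
    ← integral_div]
  refine integral_congr_ae (.of_forall fun x => ?_)
  simp only [add_mul, sub_mul, Real.sin_add, Real.sin_sub]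
  ring

lemma integral_cos_mul_div_sinh (s : ℝ) :
    ∫ x in Ioi (0 : ℝ),
        Real.cos (s * x) * x / ((1 + x ^ 2) * Real.sinh (Real.pi * x / 2)) =
      2 * Real.sinh s * Real.arctan (Real.exp (-s)) + Real.pi / 2 * Real.exp (-s) - 1 := by
  let f : ℝ → ℝ → ℝ := fun x t =>
    Real.exp (-t) * (Real.cos (s * x) * Real.sin (t * x) / Real.sinh (Real.pi * x / 2))
  have hf : Integrable (Function.uncurry f)
      ((volume.restrict (Ioi (0 : ℝ))).prod (volume.restrict (Ioi (0 : ℝ)))) := by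
    have hdom := integrableOn_div_sinh.mul_prod (integrableOn_mul_exp_neg_mul one_pos)
    refine hdom.mono' (Measurable.aestronglyMeasurable (by
      simp only [f, Function.uncurry_def]; measurability)) ?_
    rw [Measure.prod_restrict]
    filter_upwards [ae_restrict_mem (measurableSet_Ioi.prod measurableSet_Ioi)] with ⟨x, t⟩ hp
    obtain ⟨hx, ht⟩ : 0 < x ∧ 0 < t := hp
    have hsinh : 0 < Real.sinh (Real.pi * x / 2) := Real.sinh_pos_iff.2 (by positivity)
    have h := Real.abs_sin_le_abs (x := t * x)
    rw [abs_mul, abs_of_pos hx, abs_of_pos ht] at h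
    simp only [f, Function.uncurry_apply_pair, norm_mul, norm_div, Real.norm_eq_abs, Real.abs_exp,
      abs_of_pos hsinh]
    calc Real.exp (-t) * (|Real.cos (s * x)| * |Real.sin (t * x)| / Real.sinh (Real.pi * x / 2))
        ≤ Real.exp (-t) * (1 * (t * x) / Real.sinh (Real.pi * x / 2)) := by
          gcongr
          exact Real.abs_cos_le_one _
      _ = _ := by rw [neg_one_mul]; ring
  have hswap := integral_integral_swap hf
  have hleft (x : ℝ) : ∫ t in Ioi (0 : ℝ), f x t =
      Real.cos (s * x) * x / ((1 + x ^ 2) * Real.sinh (Real.pi * x / 2)) := by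
    have h := integral_exp_neg_mul_sin one_pos x
    calc ∫ t in Ioi (0 : ℝ), f x t = ∫ t in Ioi (0 : ℝ),
          Real.cos (s * x) / Real.sinh (Real.pi * x / 2) *
            (Real.exp (-1 * t) * Real.sin (x * t)) := by
          refine integral_congr_ae (.of_forall fun t => ?_)
          simp only [f, neg_one_mul, mul_comm t x]
          ring
      _ = _ := by
          rw [integral_const_mul, h, div_mul_div_comm]
          congr 1
          ring
  simp only [hleft] at hswap
  rw [hswap]
  simp only [f, integral_const_mul, integral_cos_mul_sin_div_sinh]
  calc ∫ t in Ioi (0 : ℝ), Real.exp (-t) * ((Real.tanh (t + s) + Real.tanh (t - s)) / 2)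
      = ∫ t in Ioi (0 : ℝ), (Real.exp (-t) * Real.tanh (t + s) +
          Real.exp (-t) * Real.tanh (t + -s)) / 2 := by
        refine integral_congr_ae (.of_forall fun t => ?_)
        simp only [← sub_eq_add_neg]
        ring
    _ = _ := by
        rw [integral_div, integral_add (integrableOn_exp_neg_mul_tanh s)
          (integrableOn_exp_neg_mul_tanh (-s)), integral_exp_neg_mul_tanh,
          integral_exp_neg_mul_tanh, neg_neg]
        have h := Real.arctan_inv_of_pos (Real.exp_pos (-s))
        rw [← Real.exp_neg, neg_neg] at h
        rw [h, Real.sinh_eq]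
        ring

/-- For every `s ∈ ℝ`,
`∫₀^∞ cos(s x) · x / ((1+x²) · sinh(πx/2)) dx = 2 sinh(s) arctan(e^{−s}) + (π/2) e^{−s} − 1`;
in particular, at `s = 0`, `∫₀^∞ x / ((1+x²) sinh(πx/2)) dx = π/2 − 1`. -/
theorem stmt_12 :
    (∀ s : ℝ,
      ∫ x in Ioi (0 : ℝ),
          Real.cos (s * x) * x / ((1 + x ^ 2) * Real.sinh (Real.pi * x / 2)) =
        2 * Real.sinh s * Real.arctan (Real.exp (-s)) + Real.pi / 2 * Real.exp (-s) - 1) ∧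
    (∫ x in Ioi (0 : ℝ), x / ((1 + x ^ 2) * Real.sinh (Real.pi * x / 2)) =
        Real.pi / 2 - 1) := by
  exact ⟨integral_cos_mul_div_sinh, by simpa using integral_cos_mul_div_sinh 0⟩
end

section
/- For every s > 0, ∫₀^∞ cos(s x) · 2x / ((1+x²)·(e^{πx/2} + 1)) dx = (π/2)·e^{−s} + 2·sinh(s)·arctan(e^{−s}) + cosh(s)·log((1 − e^{−s})/(1 + e^{−s})) − (e^{−s}·Ei(s) − e^{s}·E₁(s))/2. Moreover, at s = 0, ∫₀^∞ 2x / ((1+x²)·(e^{πx/2} + 1)) dx = π/2 − γ − log 2. -/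
open MeasureTheory Set

/-- The exponential integral `E₁(x) = ∫_x^∞ e^{−t}/t dt` for `x > 0`. -/
noncomputable def expIntegralE1 (x : ℝ) : ℝ :=
  ∫ t in Ioi x, Real.exp (-t) / t

/-- The principal-value exponential integral
`Ei(x) = γ + log x + Σ_{k≥1} x^k/(k·k!)` for `x > 0`. -/
noncomputable def expIntegralEi (x : ℝ) : ℝ :=
  Real.eulerMascheroniConstant + Real.log x +
    ∑' k : ℕ, x ^ (k + 1) / ((k + 1) * (Nat.factorial (k + 1)))

open Filter Topology

/-- The Laplace transform of the sine function. -/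
lemma integral_sin_mul_exp_neg (s : ℝ) {b : ℝ} (hb : 0 < b) :
    ∫ x in Ioi (0 : ℝ), Real.sin (s * x) * Real.exp (-(b * x)) = s / (s ^ 2 + b ^ 2) := by
  have hne : s ^ 2 + b ^ 2 ≠ 0 := by positivity
  have hexp : Tendsto (fun x : ℝ => Real.exp (-(b * x))) atTop (𝓝 0) :=
    Real.tendsto_exp_neg_atTop_nhds_zero.comp (tendsto_id.const_mul_atTop hb)
  have hint : IntegrableOn (fun x : ℝ => Real.exp (-(b * x))) (Ioi 0) := by
    simpa [neg_mul] using integrableOn_exp_mul_Ioi (neg_lt_zero.2 hb) 0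
  have key := integral_Ioi_of_hasDerivAt_of_tendsto' (a := 0) (m := 0)
    (f := fun x : ℝ => -(b * Real.sin (s * x) + s * Real.cos (s * x)) / (s ^ 2 + b ^ 2) *
      Real.exp (-(b * x)))
    (f' := fun x : ℝ => Real.sin (s * x) * Real.exp (-(b * x))) ?_ ?_ ?_
  · rw [key]; simp; ring
  · intro x _
    have hlin (c : ℝ) : HasDerivAt (fun x : ℝ => c * x) c x := by
      simpa using (hasDerivAt_id x).const_mul c
    have h1 := (hlin s).sin.const_mul b
    have h2 := (hlin s).cos.const_mul s
    have h3 := (hlin b).neg.exp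
    refine (((h1.add h2).neg.div_const (s ^ 2 + b ^ 2)).mul h3).congr_deriv ?_
    simp only [Pi.add_apply, Pi.neg_apply]
    field_simp
    ring
  · refine hint.mono' (by fun_prop) (Eventually.of_forall fun x => ?_)
    rw [norm_mul, Real.norm_eq_abs, Real.norm_eq_abs, abs_of_pos (Real.exp_pos _)]
    exact mul_le_of_le_one_left (Real.exp_pos _).le (Real.abs_sin_le_one _)
  · refine squeeze_zero_norm (a := fun x => (b + |s|) / (s ^ 2 + b ^ 2) * Real.exp (-(b * x)))
      (fun x => ?_) (by simpa using hexp.const_mul ((b + |s|) / (s ^ 2 + b ^ 2)))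
    rw [norm_mul, Real.norm_eq_abs, Real.norm_eq_abs, abs_of_pos (Real.exp_pos _), abs_div,
      abs_neg, abs_of_pos (by positivity : 0 < s ^ 2 + b ^ 2)]
    gcongr
    refine (abs_add_le _ _).trans (add_le_add ?_ ?_)
    · rw [abs_mul, abs_of_pos hb]
      exact mul_le_of_le_one_right hb.le (Real.abs_sin_le_one _)
    · rw [abs_mul]
      exact mul_le_of_le_one_right (abs_nonneg _) (Real.abs_cos_le_one _)

/-- The partial fraction expansion of the hyperbolic cotangent. -/
lemma tsum_two_mul_div_sq_add_sq {y : ℝ} (hy : 0 < y) :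
    ∑' n : ℕ, 2 * y / (y ^ 2 + ((n : ℝ) + 1) ^ 2) =
      Real.pi * (Real.cosh (Real.pi * y) / Real.sinh (Real.pi * y)) - 1 / y := by
  have hmem : (y : ℂ) * Complex.I ∈ Complex.integerComplement :=
    UpperHalfPlane.coe_mem_integerComplement ⟨y * Complex.I, by simpa using hy⟩
  have h := cot_series_rep' hmem
  have hy' : (y : ℂ) ≠ 0 := by exact_mod_cast hy.ne'
  have hterm (n : ℕ) : 1 / ((y : ℂ) * Complex.I - (n + 1)) + 1 / (y * Complex.I + (n + 1)) =
      -Complex.I * ((2 * y / (y ^ 2 + ((n : ℝ) + 1) ^ 2) : ℝ) : ℂ) := by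
    have h0 : (y : ℂ) ^ 2 + ((n : ℂ) + 1) ^ 2 ≠ 0 := by
      have : y ^ 2 + ((n : ℝ) + 1) ^ 2 ≠ 0 := by positivity
      exact_mod_cast this
    have hprod : ((y : ℂ) * Complex.I - (n + 1)) * (y * Complex.I + (n + 1)) =
        -(y ^ 2 + ((n : ℂ) + 1) ^ 2) := by
      linear_combination (y : ℂ) ^ 2 * Complex.I_sq
    have h12 : ((y : ℂ) * Complex.I - (n + 1)) * (y * Complex.I + (n + 1)) ≠ 0 := by
      rw [hprod]; exact neg_ne_zero.2 h0
    rw [div_add_div _ _ (left_ne_zero_of_mul h12) (right_ne_zero_of_mul h12), hprod]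
    push_cast
    field_simp
    ring
  simp_rw [hterm] at h
  rw [tsum_mul_left, ← Complex.ofReal_tsum] at h
  have hcot : Complex.cot (Real.pi * (y * Complex.I)) =
      -Complex.I * ((Real.cosh (Real.pi * y) / Real.sinh (Real.pi * y) : ℝ) : ℂ) := by
    rw [Complex.cot, ← mul_assoc, Complex.cos_mul_I, Complex.sin_mul_I]
    push_cast
    rw [div_mul_eq_div_div_swap, Complex.div_I]
    ring
  have hinv : 1 / ((y : ℂ) * Complex.I) = -Complex.I * ((1 / y : ℝ) : ℂ) := by
    rw [div_mul_eq_div_div, Complex.div_I]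
    push_cast
    ring
  rw [hcot, hinv] at h
  have h' : -Complex.I * ((Real.pi * (Real.cosh (Real.pi * y) / Real.sinh (Real.pi * y)) - 1 / y
      : ℝ) : ℂ) = -Complex.I * ((∑' n : ℕ, 2 * y / (y ^ 2 + ((n : ℝ) + 1) ^ 2) : ℝ) : ℂ) := by
    rw [← h]; push_cast; ring
  exact_mod_cast (mul_left_cancel₀ (neg_ne_zero.2 Complex.I_ne_zero) h').symm

lemma integrableOn_id_mul_exp_neg {b : ℝ} (hb : 0 < b) :
    IntegrableOn (fun x : ℝ => x * Real.exp (-(b * x))) (Ioi 0) := by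
  simpa using integrableOn_rpow_mul_exp_neg_mul_rpow (p := 1) (s := 1) (by norm_num)
    one_pos hb

lemma integral_id_mul_exp_neg {b : ℝ} (hb : 0 < b) :
    ∫ x in Ioi (0 : ℝ), x * Real.exp (-(b * x)) = 1 / b ^ 2 := by
  have h := Real.integral_rpow_mul_exp_neg_mul_Ioi (a := 2) (r := b) two_pos hb
  norm_num at h
  simpa using h

lemma integrableOn_sin_div_exp_sub_one (s : ℝ) {a : ℝ} (ha : 0 < a) :
    IntegrableOn (fun x : ℝ => Real.sin (s * x) / (Real.exp (a * x) - 1)) (Ioi 0) := by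
  have hint : IntegrableOn (fun x : ℝ => |s| / a * Real.exp (-(a / 2 * x))) (Ioi 0) := by
    have := integrableOn_exp_mul_Ioi (neg_lt_zero.2 (half_pos ha)) 0
    simp only [neg_mul] at this
    exact this.const_mul _
  refine hint.mono' (Measurable.aestronglyMeasurable (by fun_prop)) ?_
  filter_upwards [ae_restrict_mem measurableSet_Ioi] with x (hx : 0 < x)
  have hsq : Real.exp (a * x) = Real.exp (a / 2 * x) ^ 2 := by
    rw [sq, ← Real.exp_add]; ring_nf
  have hpos := Real.exp_pos (a / 2 * x)
  have hle : a * x * Real.exp (a / 2 * x) ≤ Real.exp (a * x) - 1 := by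
    have := Real.self_le_sinh_iff.2 (by positivity : 0 ≤ a / 2 * x)
    rw [Real.sinh_eq, Real.exp_neg] at this
    have h2 := mul_le_mul_of_nonneg_right this (mul_pos two_pos hpos).le
    rw [hsq]
    have h3 : Real.exp (a / 2 * x) * (Real.exp (a / 2 * x))⁻¹ = 1 := mul_inv_cancel₀ hpos.ne'
    linear_combination h2 - h3
  rw [norm_div, Real.norm_eq_abs, Real.norm_eq_abs,
    abs_of_pos (lt_of_lt_of_le (by positivity) hle), Real.exp_neg]
  calc |Real.sin (s * x)| / (Real.exp (a * x) - 1)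
      ≤ (|s| * x) / (a * x * Real.exp (a / 2 * x)) := by
        gcongr
        simpa [abs_mul, abs_of_pos hx] using Real.abs_sin_le_abs (x := s * x)
    _ = |s| / a * (Real.exp (a / 2 * x))⁻¹ := by field_simp

lemma integral_sin_div_exp_sub_one {s a : ℝ} (hs : 0 < s) (ha : 0 < a) :
    ∫ x in Ioi (0 : ℝ), Real.sin (s * x) / (Real.exp (a * x) - 1) =
      Real.pi / (2 * a) * (Real.cosh (Real.pi * (s / a)) / Real.sinh (Real.pi * (s / a))) -
        1 / (2 * s) := by
  have hb (n : ℕ) : 0 < ((n : ℝ) + 1) * a := by positivity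
  have hbound (n : ℕ) (x : ℝ) (hx : 0 < x) :
      ‖Real.sin (s * x) * Real.exp (-((n + 1) * a * x))‖ ≤
        s * (x * Real.exp (-((n + 1) * a * x))) := by
    rw [norm_mul, Real.norm_eq_abs, Real.norm_eq_abs, abs_of_pos (Real.exp_pos _), ← mul_assoc]
    gcongr
    simpa [abs_mul, abs_of_pos hx, abs_of_pos hs] using Real.abs_sin_le_abs (x := s * x)
  have hint (n : ℕ) : IntegrableOn
      (fun x : ℝ => Real.sin (s * x) * Real.exp (-((n + 1) * a * x))) (Ioi 0) := by
    refine ((integrableOn_id_mul_exp_neg (hb n)).const_mul s).mono' (by fun_prop) ?_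
    filter_upwards [ae_restrict_mem measurableSet_Ioi] with x hx using hbound n x hx
  have hsum : Summable fun n : ℕ =>
      ∫ x in Ioi (0 : ℝ), ‖Real.sin (s * x) * Real.exp (-((n + 1) * a * x))‖ := by
    have hsq : Summable fun n : ℕ => s / a ^ 2 * (1 / ((n : ℝ) + 1) ^ 2) := by
      have := (summable_nat_add_iff 1).2 (Real.summable_one_div_nat_pow.2 one_lt_two)
      exact (by simpa using this : Summable fun n : ℕ => 1 / ((n : ℝ) + 1) ^ 2).mul_left _
    refine hsq.of_nonneg_of_le (fun n => by positivity) fun n => ?_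
    calc _ ≤ ∫ x in Ioi (0 : ℝ), s * (x * Real.exp (-((n + 1) * a * x))) :=
          setIntegral_mono_on (hint n).norm ((integrableOn_id_mul_exp_neg (hb n)).const_mul s)
            measurableSet_Ioi (hbound n)
      _ = s / a ^ 2 * (1 / ((n : ℝ) + 1) ^ 2) := by
          rw [integral_const_mul, integral_id_mul_exp_neg (hb n)]
          field_simp
  have key := (hasSum_integral_of_summable_integral_norm hint hsum).tsum_eq
  have hgeom : ∫ x in Ioi (0 : ℝ), ∑' n : ℕ, Real.sin (s * x) * Real.exp (-((n + 1) * a * x)) =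
      ∫ x in Ioi (0 : ℝ), Real.sin (s * x) / (Real.exp (a * x) - 1) := by
    refine setIntegral_congr_fun measurableSet_Ioi fun x (hx : 0 < x) => ?_
    have hlt : Real.exp (-(a * x)) < 1 := by
      rw [Real.exp_lt_one_iff]; linarith [mul_pos ha hx]
    have hpow (n : ℕ) : Real.exp (-((n + 1) * a * x)) =
        Real.exp (-(a * x)) * Real.exp (-(a * x)) ^ n := by
      rw [← Real.exp_nat_mul, ← Real.exp_add]; ring_nf
    have h1 : 1 < Real.exp (a * x) := Real.one_lt_exp_iff.2 (mul_pos ha hx)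
    simp only [hpow]
    rw [tsum_mul_left, tsum_mul_left, tsum_geometric_of_lt_one (Real.exp_pos _).le hlt,
      Real.exp_neg]
    have h2 : Real.exp (a * x) - 1 ≠ 0 := by linarith
    field_simp
  rw [← hgeom, ← key]
  have hterm (n : ℕ) : ∫ x in Ioi (0 : ℝ), Real.sin (s * x) * Real.exp (-((n + 1) * a * x)) =
      1 / (2 * a) * (2 * (s / a) / ((s / a) ^ 2 + ((n : ℝ) + 1) ^ 2)) := by
    rw [integral_sin_mul_exp_neg s (hb n)]
    field_simp
  simp_rw [hterm]
  rw [tsum_mul_left, tsum_two_mul_div_sq_add_sq (div_pos hs ha)]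
  field_simp

lemma integral_sin_div_exp_add_one {s : ℝ} (hs : 0 < s) :
    ∫ x in Ioi (0 : ℝ), Real.sin (s * x) / (Real.exp (Real.pi * x / 2) + 1) =
      1 / (2 * s) - 1 / Real.sinh (2 * s) := by
  have hsplit : ∫ x in Ioi (0 : ℝ), Real.sin (s * x) / (Real.exp (Real.pi * x / 2) + 1) =
      ∫ x in Ioi (0 : ℝ), (Real.sin (s * x) / (Real.exp (Real.pi / 2 * x) - 1) -
        2 * (Real.sin (s * x) / (Real.exp (Real.pi * x) - 1))) := by
    refine setIntegral_congr_fun measurableSet_Ioi fun x (hx : 0 < x) => ?_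
    have hsq : Real.exp (Real.pi * x) = Real.exp (Real.pi / 2 * x) ^ 2 := by
      rw [sq, ← Real.exp_add]; ring_nf
    have h1 : 1 < Real.exp (Real.pi / 2 * x) := Real.one_lt_exp_iff.2 (by positivity)
    have h2 : Real.exp (Real.pi / 2 * x) - 1 ≠ 0 := by linarith
    have h3 : Real.exp (Real.pi / 2 * x) + 1 ≠ 0 := by linarith
    rw [show Real.pi * x / 2 = Real.pi / 2 * x by ring, hsq]
    generalize Real.exp (Real.pi / 2 * x) = u at *
    rw [show u ^ 2 - 1 = (u - 1) * (u + 1) by ring]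
    field_simp
    ring
  rw [hsplit, integral_sub (integrableOn_sin_div_exp_sub_one s (by positivity))
    ((integrableOn_sin_div_exp_sub_one s Real.pi_pos).const_mul 2), integral_const_mul,
    integral_sin_div_exp_sub_one hs (by positivity), integral_sin_div_exp_sub_one hs Real.pi_pos]
  have e1 : Real.pi * (s / (Real.pi / 2)) = 2 * s := by field_simp
  have e2 : Real.pi * (s / Real.pi) = s := by field_simp
  have e3 : Real.pi / (2 * (Real.pi / 2)) = 1 := by field_simp
  have e4 : Real.pi / (2 * Real.pi) = 1 / 2 := by field_simp
  have hsinh : Real.sinh s ≠ 0 := (Real.sinh_pos_iff.2 hs).ne'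
  have hcosh : Real.cosh s ≠ 0 := (Real.cosh_pos s).ne'
  rw [e1, e2, e3, e4, Real.sinh_two_mul, Real.cosh_two_mul]
  field_simp
  linear_combination (-s) * Real.cosh_sq s

lemma integrableOn_exp_neg_div {s : ℝ} (hs : 0 < s) :
    IntegrableOn (fun t : ℝ => Real.exp (-t) / t) (Ioi s) := by
  refine ((integrableOn_exp_neg_Ioi s).const_mul s⁻¹).mono'
    (Measurable.aestronglyMeasurable (by fun_prop)) ?_
  filter_upwards [ae_restrict_mem measurableSet_Ioi] with t (ht : s < t)
  have ht0 : 0 < t := hs.trans ht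
  rw [Real.norm_eq_abs, abs_of_pos (by positivity), div_eq_inv_mul]
  gcongr

lemma hasDerivAt_expIntegralE1 {s : ℝ} (hs : 0 < s) :
    HasDerivAt expIntegralE1 (-(Real.exp (-s) / s)) s := by
  have hs2 : 0 < s / 2 := half_pos hs
  have hc : ContinuousOn (fun t : ℝ => Real.exp (-t) / t) (Ioi 0) :=
    ContinuousOn.div (by fun_prop) continuousOn_id fun t ht => (ne_of_gt ht)
  have hFTC : HasDerivAt (fun u => ∫ t in (s / 2)..u, Real.exp (-t) / t) (Real.exp (-s) / s) s := by
    refine intervalIntegral.integral_hasDerivAt_right ?_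
      (hc.stronglyMeasurableAtFilter isOpen_Ioi s hs) (hc.continuousAt (Ioi_mem_nhds hs))
    refine (hc.mono fun t ht => ?_).intervalIntegrable
    rw [uIcc_of_le (by linarith)] at ht
    exact hs2.trans_le ht.1
  refine (hFTC.const_sub (expIntegralE1 (s / 2))).congr_of_eventuallyEq ?_
  filter_upwards [Ioi_mem_nhds hs] with u hu
  have := intervalIntegral.integral_interval_add_Ioi (integrableOn_exp_neg_div hs2)
    (integrableOn_exp_neg_div hu)
  simp only [expIntegralE1]
  linarith

lemma tendsto_expIntegralE1_atTop : Tendsto expIntegralE1 atTop (𝓝 0) :=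
  tendsto_integral_Ioi_zero tendsto_id

lemma integral_log_mul_exp_neg :
    ∫ t in Ioi (0 : ℝ), Real.log t * Real.exp (-t) = -Real.eulerMascheroniConstant := by
  have h1 := Complex.hasDerivAt_GammaIntegral (s := 1) (by simp)
  have h2 : HasDerivAt Complex.GammaIntegral (-Real.eulerMascheroniConstant) 1 := by
    refine Complex.hasDerivAt_Gamma_one.congr_of_eventuallyEq ?_
    have : {z : ℂ | 0 < z.re} ∈ 𝓝 (1 : ℂ) :=
      (isOpen_lt continuous_const Complex.continuous_re).mem_nhds (by simp)
    filter_upwards [this] with z hz using (Complex.Gamma_eq_integral hz).symm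
  have h := h1.unique h2
  simp only [sub_self, Complex.cpow_zero, one_mul] at h
  have h' : ((∫ t in Ioi (0 : ℝ), Real.log t * Real.exp (-t) : ℝ) : ℂ) =
      ((-Real.eulerMascheroniConstant : ℝ) : ℂ) := by
    rw [← integral_complex_ofReal]
    push_cast
    push_cast at h
    exact h
  exact_mod_cast h'

lemma integrableOn_log_mul_exp_neg :
    IntegrableOn (fun t : ℝ => Real.log t * Real.exp (-t)) (Ioi 0) := by
  by_contra h
  have h0 := integral_log_mul_exp_neg
  rw [integral_undef h] at h0
  linarith [Real.one_half_lt_eulerMascheroniConstant]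

lemma expIntegralE1_eq_log_add {s : ℝ} (hs : 0 < s) :
    expIntegralE1 s = -(Real.log s * Real.exp (-s)) +
      ∫ t in Ioi s, Real.log t * Real.exp (-t) := by
  have hlog : IntegrableOn (fun t : ℝ => Real.log t * Real.exp (-t)) (Ioi s) :=
    integrableOn_log_mul_exp_neg.mono_set (Ioi_subset_Ioi hs.le)
  have key := integral_Ioi_of_hasDerivAt_of_tendsto' (a := s) (m := 0)
    (f := fun t : ℝ => Real.log t * Real.exp (-t))
    (f' := fun t : ℝ => Real.exp (-t) / t - Real.log t * Real.exp (-t)) ?_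
    ((integrableOn_exp_neg_div hs).sub hlog) ?_
  · rw [integral_sub (integrableOn_exp_neg_div hs) hlog] at key
    rw [expIntegralE1]
    linarith
  · intro t ht
    have ht0 : 0 < t := hs.trans_le ht
    refine ((Real.hasDerivAt_log ht0.ne').mul (hasDerivAt_neg t).exp).congr_deriv ?_
    field_simp
    ring
  · have h1 : Tendsto (fun t : ℝ => t * Real.exp (-t)) atTop (𝓝 0) := by
      simpa using Real.tendsto_pow_mul_exp_neg_atTop_nhds_zero 1
    refine squeeze_zero' ?_ ?_ h1
    · filter_upwards [eventually_ge_atTop 1] with t ht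
      exact mul_nonneg (Real.log_nonneg ht) (Real.exp_pos _).le
    · filter_upwards [eventually_ge_atTop 1] with t ht
      gcongr
      exact (Real.log_le_sub_one_of_pos (by linarith)).trans (by linarith)

lemma tendsto_expIntegralE1_add_log :
    Tendsto (fun s => expIntegralE1 s + Real.log s) (𝓝[>] 0)
      (𝓝 (-Real.eulerMascheroniConstant)) := by
  have hint : Tendsto (fun s : ℝ => ∫ t in Ioi s, Real.log t * Real.exp (-t)) (𝓝[>] 0)
      (𝓝 (-Real.eulerMascheroniConstant)) := by
    have hI := integrableOn_log_mul_exp_neg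
    have hprim : Tendsto (fun s : ℝ => ∫ t in (0 : ℝ)..s, Real.log t * Real.exp (-t)) (𝓝[>] 0)
        (𝓝 0) := by
      have hc : ContinuousOn (fun s : ℝ => ∫ t in (0 : ℝ)..s, Real.log t * Real.exp (-t))
          (uIcc 0 1) := by
        refine intervalIntegral.continuousOn_primitive_interval ?_
        rw [uIcc_of_le zero_le_one, integrableOn_Icc_iff_integrableOn_Ioc]
        exact hI.mono_set Ioc_subset_Ioi_self
      have h0 := (hc 0 (by simp)).tendsto
      rw [intervalIntegral.integral_same, uIcc_of_le zero_le_one] at h0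
      refine h0.mono_left (nhdsWithin_le_iff.2 ?_)
      filter_upwards [Ioo_mem_nhdsGT (zero_lt_one (α := ℝ))] with x hx using ⟨hx.1.le, hx.2.le⟩
    have h := hprim.const_sub (-Real.eulerMascheroniConstant)
    rw [sub_zero] at h
    refine h.congr' ?_
    filter_upwards [self_mem_nhdsWithin] with s (hs : 0 < s)
    have := intervalIntegral.integral_interval_add_Ioi hI (hI.mono_set (Ioi_subset_Ioi hs.le))
    rw [integral_log_mul_exp_neg] at this
    linarith
  have hsmall : Tendsto (fun s : ℝ => Real.log s * (1 - Real.exp (-s))) (𝓝[>] 0) (𝓝 0) := by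
    have h := (tendsto_log_mul_rpow_nhdsGT_zero one_pos).norm
    simp only [norm_zero] at h
    refine squeeze_zero_norm' ?_ h
    filter_upwards [self_mem_nhdsWithin] with s (hs : 0 < s)
    rw [norm_mul, norm_mul, Real.rpow_one, Real.norm_eq_abs (1 - _), Real.norm_eq_abs s,
      abs_of_pos hs, abs_of_nonneg (by rw [sub_nonneg, Real.exp_le_one_iff]; linarith)]
    gcongr
    linarith [Real.add_one_le_exp (-s)]
  have h := hsmall.add hint
  rw [zero_add] at h
  refine h.congr' ?_
  filter_upwards [self_mem_nhdsWithin] with s (hs : 0 < s)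
  rw [expIntegralE1_eq_log_add hs]
  ring

lemma hasDerivAt_tsum_pow_div_mul_factorial (x : ℝ) :
    HasDerivAt (fun x : ℝ => ∑' k : ℕ, x ^ (k + 1) / ((k + 1) * (Nat.factorial (k + 1))))
      (∑' k : ℕ, x ^ k / (Nat.factorial (k + 1))) x := by
  have hu : Summable fun k : ℕ => (|x| + 1) ^ k / (Nat.factorial k : ℝ) :=
    Real.summable_pow_div_factorial _
  refine hasDerivAt_tsum_of_isPreconnected
    (g' := fun (k : ℕ) (x : ℝ) => x ^ k / (Nat.factorial (k + 1) : ℝ)) (y₀ := 0) hu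
    Metric.isOpen_ball (convex_ball (0 : ℝ) (|x| + 1)).isPreconnected (fun k y _ => ?_)
    (fun k y hy => ?_) (Metric.mem_ball_self (by positivity)) (by simp [summable_zero]) (by simp)
  · refine ((hasDerivAt_pow (k + 1) y).div_const _).congr_deriv ?_
    push_cast
    field_simp
  · rw [norm_div, norm_pow, Real.norm_natCast]
    have hy' : ‖y‖ ≤ |x| + 1 := by simpa using (mem_ball_zero_iff.1 hy).le
    gcongr
    exact Nat.le_succ k

lemma hasDerivAt_expIntegralEi {x : ℝ} (hx : 0 < x) :
    HasDerivAt expIntegralEi (Real.exp x / x) x := by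
  refine (((Real.hasDerivAt_log hx.ne').const_add _).add
    (hasDerivAt_tsum_pow_div_mul_factorial x)).congr_deriv ?_
  have hexp : Real.exp x = 1 + ∑' k : ℕ, x ^ (k + 1) / (Nat.factorial (k + 1)) := by
    rw [Real.exp_eq_exp_ℝ, NormedSpace.exp_eq_tsum_div]
    beta_reduce
    rw [(Real.summable_pow_div_factorial x).tsum_eq_zero_add]
    simp
  have hshift : ∑' k : ℕ, x ^ (k + 1) / (Nat.factorial (k + 1) : ℝ) =
      x * ∑' k : ℕ, x ^ k / (Nat.factorial (k + 1) : ℝ) := by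
    rw [← tsum_mul_left]
    exact tsum_congr fun k => by ring
  rw [hexp, hshift]
  field_simp

lemma tendsto_expIntegralEi_sub_log :
    Tendsto (fun s => expIntegralEi s - Real.log s) (𝓝[>] 0)
      (𝓝 Real.eulerMascheroniConstant) := by
  have h := ((hasDerivAt_tsum_pow_div_mul_factorial 0).continuousAt.tendsto.mono_left
    (nhdsWithin_le_nhds (s := Ioi 0))).const_add Real.eulerMascheroniConstant
  simp only [ne_eq, Nat.add_eq_zero_iff, one_ne_zero, and_false, not_false_eq_true, zero_pow,
    zero_div, tsum_zero, add_zero] at h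
  refine h.congr fun s => ?_
  rw [expIntegralEi]
  ring

section FourierIntegral

variable {μ : Measure ℝ} {g : ℝ → ℝ}

lemma hasDerivAt_integral_cos_mul (hg : Integrable g μ) (hxg : Integrable (fun x => x * g x) μ)
    (s : ℝ) :
    HasDerivAt (fun s => ∫ x, Real.cos (s * x) * g x ∂μ)
      (-∫ x, Real.sin (s * x) * (x * g x) ∂μ) s := by
  rw [← integral_neg]
  have hm (s : ℝ) : AEStronglyMeasurable (fun x => Real.cos (s * x) * g x) μ :=
    (Continuous.aestronglyMeasurable (by fun_prop)).mul hg.aestronglyMeasurable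
  refine (hasDerivAt_integral_of_dominated_loc_of_deriv_le (s := univ)
    (F := fun s x => Real.cos (s * x) * g x) (F' := fun s x => -(Real.sin (s * x) * (x * g x)))
    (bound := fun x => ‖x * g x‖) univ_mem (Eventually.of_forall hm) ?_ ?_ ?_ hxg.norm ?_).2
  · refine hg.norm.mono' (hm s) (Eventually.of_forall fun x => ?_)
    rw [norm_mul]
    exact mul_le_of_le_one_left (norm_nonneg _) (Real.abs_cos_le_one _)
  · exact ((Continuous.aestronglyMeasurable (by fun_prop)).mul hxg.aestronglyMeasurable).neg
  · refine Eventually.of_forall fun x t _ => ?_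
    rw [norm_neg, norm_mul]
    exact mul_le_of_le_one_left (norm_nonneg _) (Real.abs_sin_le_one _)
  · refine Eventually.of_forall fun x t _ => ?_
    have hlin : HasDerivAt (fun t : ℝ => t * x) x t := by simpa using (hasDerivAt_id t).mul_const x
    exact (hlin.cos.mul_const (g x)).congr_deriv (by ring)

lemma hasDerivAt_integral_sin_mul (hg : Integrable g μ) (hxg : Integrable (fun x => x * g x) μ)
    (s : ℝ) :
    HasDerivAt (fun s => ∫ x, Real.sin (s * x) * g x ∂μ)
      (∫ x, Real.cos (s * x) * (x * g x) ∂μ) s := by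
  have hm (s : ℝ) : AEStronglyMeasurable (fun x => Real.sin (s * x) * g x) μ :=
    (Continuous.aestronglyMeasurable (by fun_prop)).mul hg.aestronglyMeasurable
  refine (hasDerivAt_integral_of_dominated_loc_of_deriv_le (s := univ)
    (F := fun s x => Real.sin (s * x) * g x) (F' := fun s x => Real.cos (s * x) * (x * g x))
    (bound := fun x => ‖x * g x‖) univ_mem (Eventually.of_forall hm) ?_ ?_ ?_ hxg.norm ?_).2
  · refine hg.norm.mono' (hm s) (Eventually.of_forall fun x => ?_)
    rw [norm_mul]
    exact mul_le_of_le_one_left (norm_nonneg _) (Real.abs_sin_le_one _)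
  · exact (Continuous.aestronglyMeasurable (by fun_prop)).mul hxg.aestronglyMeasurable
  · refine Eventually.of_forall fun x t _ => ?_
    rw [norm_mul]
    exact mul_le_of_le_one_left (norm_nonneg _) (Real.abs_cos_le_one _)
  · refine Eventually.of_forall fun x t _ => ?_
    have hlin : HasDerivAt (fun t : ℝ => t * x) x t := by simpa using (hasDerivAt_id t).mul_const x
    exact (hlin.sin.mul_const (g x)).congr_deriv (by ring)

lemma abs_integral_cos_mul_le (hg : Integrable g μ) (s : ℝ) :
    |∫ x, Real.cos (s * x) * g x ∂μ| ≤ ∫ x, |g x| ∂μ := by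
  rw [← Real.norm_eq_abs]
  refine norm_integral_le_of_norm_le hg.abs (Eventually.of_forall fun x => ?_)
  rw [norm_mul]
  exact mul_le_of_le_one_left (norm_nonneg _) (Real.abs_cos_le_one _)

lemma abs_integral_sin_mul_le (hg : Integrable g μ) (s : ℝ) :
    |∫ x, Real.sin (s * x) * g x ∂μ| ≤ ∫ x, |g x| ∂μ := by
  rw [← Real.norm_eq_abs]
  refine norm_integral_le_of_norm_le hg.abs (Eventually.of_forall fun x => ?_)
  rw [norm_mul]
  exact mul_le_of_le_one_left (norm_nonneg _) (Real.abs_sin_le_one _)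

end FourierIntegral

lemma integrableOn_div_exp_add_one {f : ℝ → ℝ} (hf : Continuous f) {C : ℝ}
    (hC : ∀ x, |f x| ≤ C) :
    IntegrableOn (fun x => f x / (Real.exp (Real.pi * x / 2) + 1)) (Ioi 0) := by
  have hint : IntegrableOn (fun x : ℝ => C * Real.exp (-(Real.pi / 2) * x)) (Ioi 0) :=
    (integrableOn_exp_mul_Ioi (neg_lt_zero.2 Real.pi_div_two_pos) 0).const_mul C
  refine hint.mono' (Measurable.aestronglyMeasurable (by fun_prop))
    (Eventually.of_forall fun x => ?_)
  have hpos := Real.exp_pos (Real.pi * x / 2)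
  rw [norm_div, Real.norm_eq_abs, Real.norm_eq_abs,
    abs_of_pos (by positivity : 0 < Real.exp (Real.pi * x / 2) + 1),
    show -(Real.pi / 2) * x = -(Real.pi * x / 2) by ring, Real.exp_neg, ← div_eq_mul_inv]
  have hC0 : 0 ≤ C := (abs_nonneg _).trans (hC 0)
  gcongr
  · exact hC x
  · linarith

/-- The kernel `2 / ((1 + x²)(e^{πx/2} + 1))`. -/
noncomputable def fermiPoissonKernel (x : ℝ) : ℝ :=
  2 / (1 + x ^ 2) / (Real.exp (Real.pi * x / 2) + 1)

/-- The cosine transform of `x ↦ x * fermiPoissonKernel x`. -/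
noncomputable def fermiCosTransform (s : ℝ) : ℝ :=
  ∫ x in Ioi (0 : ℝ), Real.cos (s * x) * (x * fermiPoissonKernel x)

/-- The sine transform of `fermiPoissonKernel`. -/
noncomputable def fermiSinTransform (s : ℝ) : ℝ :=
  ∫ x in Ioi (0 : ℝ), Real.sin (s * x) * fermiPoissonKernel x

lemma integrableOn_fermiPoissonKernel : IntegrableOn fermiPoissonKernel (Ioi 0) := by
  refine integrableOn_div_exp_add_one (f := fun x => 2 / (1 + x ^ 2)) (C := 2)
    (Continuous.div (by fun_prop) (by fun_prop) fun x => by positivity) fun x => ?_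
  rw [abs_of_pos (by positivity)]
  exact div_le_self zero_le_two (by nlinarith [sq_nonneg x])

lemma integrableOn_id_mul_fermiPoissonKernel :
    IntegrableOn (fun x => x * fermiPoissonKernel x) (Ioi 0) := by
  have := integrableOn_div_exp_add_one (f := fun x => x * (2 / (1 + x ^ 2))) (C := 1)
    (continuous_id.mul (Continuous.div (by fun_prop) (by fun_prop) fun x => by positivity))
    fun x => by
      rw [← mul_div_assoc, abs_div, abs_of_pos (by positivity : 0 < 1 + x ^ 2),
        div_le_one (by positivity), abs_mul, abs_two]
      nlinarith [sq_nonneg (|x| - 1), sq_abs x]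
  simpa only [fermiPoissonKernel, mul_div_assoc] using this

lemma id_mul_id_mul_fermiPoissonKernel (x : ℝ) :
    x * (x * fermiPoissonKernel x) =
      2 / (Real.exp (Real.pi * x / 2) + 1) - fermiPoissonKernel x := by
  have h1 : 1 + x ^ 2 ≠ 0 := by positivity
  have h2 : Real.exp (Real.pi * x / 2) + 1 ≠ 0 := by positivity
  rw [fermiPoissonKernel]
  field_simp
  ring

lemma integrableOn_two_div_exp_add_one :
    IntegrableOn (fun x => 2 / (Real.exp (Real.pi * x / 2) + 1)) (Ioi 0) :=
  integrableOn_div_exp_add_one (f := fun _ => 2) (C := 2) continuous_const fun x => by simp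

lemma integrableOn_sin_mul {g : ℝ → ℝ} (hg : IntegrableOn g (Ioi 0)) (s : ℝ) :
    IntegrableOn (fun x => Real.sin (s * x) * g x) (Ioi 0) := by
  refine hg.norm.mono'
    ((Continuous.aestronglyMeasurable (by fun_prop)).mul hg.aestronglyMeasurable)
    (Eventually.of_forall fun x => ?_)
  rw [norm_mul]
  exact mul_le_of_le_one_left (norm_nonneg _) (Real.abs_sin_le_one _)

lemma hasDerivAt_fermiSinTransform (s : ℝ) :
    HasDerivAt fermiSinTransform (fermiCosTransform s) s :=
  hasDerivAt_integral_sin_mul integrableOn_fermiPoissonKernel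
    integrableOn_id_mul_fermiPoissonKernel s

lemma hasDerivAt_fermiCosTransform_integral (s : ℝ) :
    HasDerivAt fermiCosTransform
      (fermiSinTransform s -
        ∫ x in Ioi (0 : ℝ), Real.sin (s * x) * (2 / (Real.exp (Real.pi * x / 2) + 1))) s := by
  refine (hasDerivAt_integral_cos_mul integrableOn_id_mul_fermiPoissonKernel ?_ s).congr_deriv ?_
  · simp_rw [id_mul_id_mul_fermiPoissonKernel]
    exact integrableOn_two_div_exp_add_one.sub integrableOn_fermiPoissonKernel
  · simp_rw [id_mul_id_mul_fermiPoissonKernel, mul_sub]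
    rw [integral_sub (integrableOn_sin_mul integrableOn_two_div_exp_add_one s)
      (integrableOn_sin_mul integrableOn_fermiPoissonKernel s), fermiSinTransform]
    ring

lemma hasDerivAt_fermiCosTransform {s : ℝ} (hs : 0 < s) :
    HasDerivAt fermiCosTransform
      (fermiSinTransform s - (1 / s - 2 / Real.sinh (2 * s))) s := by
  refine (hasDerivAt_fermiCosTransform_integral s).congr_deriv ?_
  have h (x : ℝ) : Real.sin (s * x) * (2 / (Real.exp (Real.pi * x / 2) + 1)) =
      2 * (Real.sin (s * x) / (Real.exp (Real.pi * x / 2) + 1)) := by ring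
  simp_rw [h]
  rw [integral_const_mul, integral_sin_div_exp_add_one hs]
  ring

lemma two_div_sinh_two_mul {s : ℝ} (hs : 0 < s) :
    2 / Real.sinh (2 * s) = 4 * Real.exp (-s) ^ 2 / (1 - Real.exp (-s) ^ 4) := by
  have hu : Real.exp (-s) < 1 := by rw [Real.exp_lt_one_iff]; linarith
  have hu0 := Real.exp_pos (-s)
  have hs0 : 0 < Real.sinh (2 * s) := Real.sinh_pos_iff.2 (by linarith)
  have h4 : 0 < 1 - Real.exp (-s) ^ 4 := by
    have := pow_lt_one₀ hu0.le hu (n := 4) (by norm_num)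
    linarith
  rw [div_eq_div_iff hs0.ne' h4.ne', Real.sinh_eq,
    show -(2 * s) = -s + -s by ring, show 2 * s = -(-s + -s) by ring, Real.exp_neg (-s + -s),
    Real.exp_add]
  field_simp
  ring

/-- The elementary function `log ((1 - e^{-s}) / (1 + e^{-s}))`, that is, `log (tanh (s / 2))`. -/
noncomputable def logTanhHalf (s : ℝ) : ℝ :=
  Real.log ((1 - Real.exp (-s)) / (1 + Real.exp (-s)))

lemma hasDerivAt_exp_neg (s : ℝ) :
    HasDerivAt (fun s => Real.exp (-s)) (-Real.exp (-s)) s :=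
  (hasDerivAt_neg s).exp.congr_deriv (by ring)

lemma hasDerivAt_logTanhHalf {s : ℝ} (hs : 0 < s) :
    HasDerivAt logTanhHalf (2 * Real.exp (-s) / (1 - Real.exp (-s) ^ 2)) s := by
  have hu : 0 < 1 - Real.exp (-s) := by rw [sub_pos, Real.exp_lt_one_iff]; linarith
  have hu1 : 0 < 1 + Real.exp (-s) := by positivity
  refine ((((hasDerivAt_exp_neg s).const_sub 1).div ((hasDerivAt_exp_neg s).const_add 1)
    hu1.ne').log (div_pos hu hu1).ne').congr_deriv ?_
  simp only [Pi.div_apply]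
  generalize Real.exp (-s) = u at *
  rw [show 1 - u ^ 2 = (1 - u) * (1 + u) by ring]
  field_simp
  ring

lemma hasDerivAt_arctan_exp_neg (s : ℝ) :
    HasDerivAt (fun s => Real.arctan (Real.exp (-s)))
      (-Real.exp (-s) / (1 + Real.exp (-s) ^ 2)) s :=
  (hasDerivAt_exp_neg s).arctan.congr_deriv (by ring)

lemma tendsto_arctan_exp_neg_nhdsGT :
    Tendsto (fun s => Real.arctan (Real.exp (-s))) (𝓝[>] 0) (𝓝 (Real.pi / 4)) := by
  have h := (hasDerivAt_arctan_exp_neg 0).continuousAt.tendsto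
  simp only [neg_zero, Real.exp_zero, Real.arctan_one] at h
  exact h.mono_left nhdsWithin_le_nhds

lemma tendsto_logTanhHalf_atTop : Tendsto logTanhHalf atTop (𝓝 0) := by
  have h := ((Real.tendsto_exp_neg_atTop_nhds_zero.const_sub 1).div
    (Real.tendsto_exp_neg_atTop_nhds_zero.const_add 1)
    (by norm_num)).log (by norm_num)
  simp only [sub_zero, add_zero, div_one, Real.log_one] at h
  exact h

lemma tendsto_logTanhHalf_sub_log :
    Tendsto (fun s => logTanhHalf s - Real.log s) (𝓝[>] 0) (𝓝 (-Real.log 2)) := by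
  have hslope : Tendsto (fun s : ℝ => (1 - Real.exp (-s)) / s) (𝓝[>] 0) (𝓝 1) := by
    have h := ((hasDerivAt_exp_neg 0).const_sub 1).tendsto_slope_zero_right
    simp only [neg_zero, Real.exp_zero, zero_add, neg_neg, sub_self, sub_zero, smul_eq_mul] at h
    exact h.congr fun s => by ring
  have hden : Tendsto (fun s : ℝ => 1 + Real.exp (-s)) (𝓝[>] 0) (𝓝 2) := by
    have h := ((hasDerivAt_exp_neg 0).const_add 1).continuousAt.tendsto
    simp only [neg_zero, Real.exp_zero, one_add_one_eq_two] at h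
    exact h.mono_left nhdsWithin_le_nhds
  have h := (hslope.div hden two_ne_zero).log (by norm_num)
  rw [one_div, Real.log_inv] at h
  refine h.congr' ?_
  filter_upwards [self_mem_nhdsWithin] with s (hs : 0 < s)
  have hu : 0 < 1 - Real.exp (-s) := by rw [sub_pos, Real.exp_lt_one_iff]; linarith
  have hu1 : 0 < 1 + Real.exp (-s) := by positivity
  rw [logTanhHalf, ← Real.log_div (div_pos hu hu1).ne' hs.ne']
  simp only [Pi.div_apply]
  congr 1
  field_simp

lemma exists_eq_const_of_hasDerivAt_zero {f : ℝ → ℝ} (hf : ∀ s, 0 < s → HasDerivAt f 0 s) :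
    ∃ c, ∀ s, 0 < s → f s = c :=
  isOpen_Ioi.exists_is_const_of_deriv_eq_zero isPreconnected_Ioi
    (fun s hs => (hf s hs).differentiableAt.differentiableWithinAt) fun s hs => (hf s hs).deriv

lemma tendsto_exp_neg_mul_transforms_atTop :
    Tendsto (fun s => Real.exp (-s) * (fermiCosTransform s + fermiSinTransform s)) atTop
      (𝓝 0) := by
  have hb (s : ℝ) := (abs_add_le _ _).trans (add_le_add
    (abs_integral_cos_mul_le integrableOn_id_mul_fermiPoissonKernel s)
    (abs_integral_sin_mul_le integrableOn_fermiPoissonKernel s))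
  have h := Real.tendsto_exp_neg_atTop_nhds_zero.mul_const
    ((∫ x in Ioi (0 : ℝ), |x * fermiPoissonKernel x|) + ∫ x in Ioi (0 : ℝ), |fermiPoissonKernel x|)
  rw [zero_mul] at h
  refine squeeze_zero_norm (fun s => ?_) h
  rw [norm_mul, Real.norm_eq_abs, abs_of_pos (Real.exp_pos _)]
  exact mul_le_mul_of_nonneg_left (hb s) (Real.exp_pos _).le

lemma exp_neg_mul_transforms {s : ℝ} (hs : 0 < s) :
    Real.exp (-s) * (fermiCosTransform s + fermiSinTransform s) =
      expIntegralE1 s + logTanhHalf s + 2 * Real.arctan (Real.exp (-s)) := by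
  obtain ⟨c, hc⟩ := exists_eq_const_of_hasDerivAt_zero
    (f := fun s => Real.exp (-s) * (fermiCosTransform s + fermiSinTransform s) -
      (expIntegralE1 s + logTanhHalf s + 2 * Real.arctan (Real.exp (-s)))) fun s hs => by
    refine (((hasDerivAt_exp_neg s).mul ((hasDerivAt_fermiCosTransform hs).add
      (hasDerivAt_fermiSinTransform s))).sub (((hasDerivAt_expIntegralE1 hs).add
      (hasDerivAt_logTanhHalf hs)).add
      ((hasDerivAt_arctan_exp_neg s).const_mul 2))).congr_deriv ?_
    have hu : 0 < 1 - Real.exp (-s) := by rw [sub_pos, Real.exp_lt_one_iff]; linarith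
    have hu0 := Real.exp_pos (-s)
    rw [two_div_sinh_two_mul hs]
    simp only [Pi.add_apply]
    generalize Real.exp (-s) = u at *
    have h1 : 0 < 1 + u := by positivity
    have h2 : 0 < 1 + u ^ 2 := by positivity
    rw [show 1 - u ^ 4 = (1 - u) * (1 + u) * (1 + u ^ 2) by ring,
      show 1 - u ^ 2 = (1 - u) * (1 + u) by ring]
    field_simp
    ring
  have hlim := tendsto_exp_neg_mul_transforms_atTop.sub
    ((tendsto_expIntegralE1_atTop.add tendsto_logTanhHalf_atTop).add
      (((Real.continuous_arctan.tendsto 0).comp Real.tendsto_exp_neg_atTop_nhds_zero).const_mul 2))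
  have h0 := tendsto_nhds_unique (hlim.congr' ((eventually_gt_atTop 0).mono hc))
    tendsto_const_nhds
  simp only [Real.arctan_zero, mul_zero, add_zero, sub_zero] at h0
  have := hc s hs
  linarith

lemma fermiSinTransform_zero : fermiSinTransform 0 = 0 := by
  simp [fermiSinTransform]

lemma tendsto_fermiCosTransform_nhdsGT :
    Tendsto fermiCosTransform (𝓝[>] 0) (𝓝 (fermiCosTransform 0)) :=
  (hasDerivAt_fermiCosTransform_integral 0).continuousAt.tendsto.mono_left nhdsWithin_le_nhds

lemma tendsto_fermiSinTransform_nhdsGT : Tendsto fermiSinTransform (𝓝[>] 0) (𝓝 0) := by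
  have h := (hasDerivAt_fermiSinTransform 0).continuousAt.tendsto
  rw [fermiSinTransform_zero] at h
  exact h.mono_left nhdsWithin_le_nhds

lemma fermiCosTransform_zero :
    fermiCosTransform 0 = Real.pi / 2 - Real.eulerMascheroniConstant - Real.log 2 := by
  have hexp : Tendsto (fun s : ℝ => Real.exp (-s)) (𝓝[>] 0) (𝓝 1) := by
    have h := (hasDerivAt_exp_neg 0).continuousAt.tendsto
    simp only [neg_zero, Real.exp_zero] at h
    exact h.mono_left nhdsWithin_le_nhds
  have hl := hexp.mul (tendsto_fermiCosTransform_nhdsGT.add tendsto_fermiSinTransform_nhdsGT)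
  have hr := (tendsto_expIntegralE1_add_log.add tendsto_logTanhHalf_sub_log).add
    (tendsto_arctan_exp_neg_nhdsGT.const_mul 2)
  have h := tendsto_nhds_unique (hl.congr' ?_) hr
  · linarith
  · filter_upwards [self_mem_nhdsWithin] with s (hs : 0 < s)
    rw [exp_neg_mul_transforms hs]
    ring

lemma exp_mul_transforms {s : ℝ} (hs : 0 < s) :
    Real.exp s * (fermiCosTransform s - fermiSinTransform s) =
      Real.pi - expIntegralEi s + logTanhHalf s - 2 * Real.arctan (Real.exp (-s)) := by
  obtain ⟨c, hc⟩ := exists_eq_const_of_hasDerivAt_zero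
    (f := fun s => Real.exp s * (fermiCosTransform s - fermiSinTransform s) -
      (logTanhHalf s - expIntegralEi s - 2 * Real.arctan (Real.exp (-s)))) fun s hs => by
    refine (((Real.hasDerivAt_exp s).mul ((hasDerivAt_fermiCosTransform hs).sub
      (hasDerivAt_fermiSinTransform s))).sub (((hasDerivAt_logTanhHalf hs).sub
      (hasDerivAt_expIntegralEi hs)).sub
      ((hasDerivAt_arctan_exp_neg s).const_mul 2))).congr_deriv ?_
    have hu : 0 < 1 - Real.exp (-s) := by rw [sub_pos, Real.exp_lt_one_iff]; linarith
    have hu0 := Real.exp_pos (-s)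
    rw [two_div_sinh_two_mul hs]
    simp only [Pi.sub_apply]
    rw [show Real.exp s = (Real.exp (-s))⁻¹ by rw [Real.exp_neg, inv_inv]]
    generalize Real.exp (-s) = u at *
    have h1 : 0 < 1 + u := by positivity
    have h2 : 0 < 1 + u ^ 2 := by positivity
    rw [show 1 - u ^ 4 = (1 - u) * (1 + u) * (1 + u ^ 2) by ring,
      show 1 - u ^ 2 = (1 - u) * (1 + u) by ring]
    field_simp
    ring
  have hexp : Tendsto Real.exp (𝓝[>] 0) (𝓝 1) := by
    have h := Real.continuous_exp.tendsto 0
    rw [Real.exp_zero] at h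
    exact h.mono_left nhdsWithin_le_nhds
  have hlim := (hexp.mul
    (tendsto_fermiCosTransform_nhdsGT.sub tendsto_fermiSinTransform_nhdsGT)).sub
    ((tendsto_logTanhHalf_sub_log.sub tendsto_expIntegralEi_sub_log).sub
      (tendsto_arctan_exp_neg_nhdsGT.const_mul 2))
  have h0 := tendsto_nhds_unique (hlim.congr' ?_) (tendsto_const_nhds (x := c))
  · rw [fermiCosTransform_zero] at h0
    have := hc s hs
    linarith
  · filter_upwards [self_mem_nhdsWithin] with s (hs : 0 < s)
    rw [← hc s hs]
    ring

lemma fermiCosTransform_eq {s : ℝ} (hs : 0 < s) :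
    fermiCosTransform s =
      Real.pi / 2 * Real.exp (-s) + 2 * Real.sinh s * Real.arctan (Real.exp (-s)) +
        Real.cosh s * Real.log ((1 - Real.exp (-s)) / (1 + Real.exp (-s))) -
        (Real.exp (-s) * expIntegralEi s - Real.exp s * expIntegralE1 s) / 2 := by
  have h1 := exp_neg_mul_transforms hs
  have h2 := exp_mul_transforms hs
  have hmul : Real.exp s * Real.exp (-s) = 1 := by rw [← Real.exp_add]; simp
  rw [logTanhHalf] at h1 h2
  rw [Real.sinh_eq, Real.cosh_eq]
  linear_combination Real.exp s / 2 * h1 + Real.exp (-s) / 2 * h2 - fermiCosTransform s * hmul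

/-- For every `s > 0`,
`∫₀^∞ cos(s x) · 2x / ((1+x²)(e^{πx/2} + 1)) dx
  = (π/2) e^{−s} + 2 sinh(s) arctan(e^{−s}) + cosh(s) log((1−e^{−s})/(1+e^{−s}))
    − (e^{−s} Ei(s) − e^{s} E₁(s))/2`,
and at `s = 0`, `∫₀^∞ 2x/((1+x²)(e^{πx/2} + 1)) dx = π/2 − γ − log 2`. -/
theorem stmt_14 :
    (∀ s : ℝ, 0 < s →
      ∫ x in Ioi (0 : ℝ),
          Real.cos (s * x) * (2 * x) / ((1 + x ^ 2) * (Real.exp (Real.pi * x / 2) + 1)) =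
        Real.pi / 2 * Real.exp (-s) + 2 * Real.sinh s * Real.arctan (Real.exp (-s)) +
          Real.cosh s * Real.log ((1 - Real.exp (-s)) / (1 + Real.exp (-s))) -
          (Real.exp (-s) * expIntegralEi s - Real.exp s * expIntegralE1 s) / 2) ∧
    (∫ x in Ioi (0 : ℝ), 2 * x / ((1 + x ^ 2) * (Real.exp (Real.pi * x / 2) + 1)) =
        Real.pi / 2 - Real.eulerMascheroniConstant - Real.log 2) := by
  have hker (s x : ℝ) :
      Real.cos (s * x) * (2 * x) / ((1 + x ^ 2) * (Real.exp (Real.pi * x / 2) + 1)) =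
        Real.cos (s * x) * (x * fermiPoissonKernel x) := by
    rw [fermiPoissonKernel, div_div]
    ring
  refine ⟨fun s hs => ?_, ?_⟩
  · simp_rw [hker]
    exact fermiCosTransform_eq hs
  · rw [← fermiCosTransform_zero, fermiCosTransform]
    simp_rw [← hker]
    simp
end
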